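/- arXiv:1811.02717 — 2 statements merged into one kernel-verified Lean document; each statement's English description precedes it below -/
import Mathlib

section
/- (Leibniz type rule for the Hilfer derivative.) Let 0 < α < 1, 0 < β ≤ 1, a < b, and set ξ := (1−β)(1−α). Suppose f, g : ℝ → ℝ are real-analytic with everywhere-convergent power series. Then for every x ∈ (a,b): (^{H}D^{α,β}(f·g))(x) = Σ_{m=0}^∞ binom(α, m) f⁽ᵐ⁾(x) (^{H}D^{α−m,β} g)(x) + Σ_{k=0}^∞ binom(−ξ, k) (I^{ξ+k}g)(a) (f⁽ᵏ⁾(x) − f⁽ᵏ⁾(a)) (x − a)^{−(α+ξ)} / Γ(β(1−α)), where f⁽ᵐ⁾ is the ordinary m-th derivative, (I^{γ}g)(a) := 0 for γ > 0 and := g(a) for γ = 0, all series converging. -/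
open Real

/-- Generalized binomial coefficient `binom(γ, n) = γ(γ-1)⋯(γ-n+1)/n!`. -/
noncomputable def genBinom (γ : ℝ) (n : ℕ) : ℝ :=
  (∏ i ∈ Finset.range n, (γ - (i : ℝ))) / (n.factorial : ℝ)

/-- Ψ-Riemann–Liouville fractional integral of order `α` with base point `a`;
by convention the order-0 integral is the identity. -/
noncomputable def psiI (a : ℝ) (Ψ f : ℝ → ℝ) (α : ℝ) (x : ℝ) : ℝ :=
  if α = 0 then f x
  else (Real.Gamma α)⁻¹ * ∫ t in a..x, deriv Ψ t * (Ψ x - Ψ t) ^ (α - 1) * f t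

/-- Ψ-Riemann–Liouville fractional derivative of order `γ` (for `γ ≤ 0` it is the
fractional integral of order `-γ`, the order-0 case being the identity). -/
noncomputable def psiRLD (a : ℝ) (Ψ f : ℝ → ℝ) (γ : ℝ) (x : ℝ) : ℝ :=
  if γ ≤ 0 then psiI a Ψ f (-γ) x
  else (deriv Ψ x)⁻¹ * deriv (fun y => psiI a Ψ f (1 - γ) y) x

/-- Ψ-Caputo fractional derivative of order `γ` (for `γ ≤ 0` it is the
fractional integral of order `-γ`). -/
noncomputable def psiCD (a : ℝ) (Ψ f : ℝ → ℝ) (γ : ℝ) (x : ℝ) : ℝ :=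
  if γ ≤ 0 then psiI a Ψ f (-γ) x
  else psiI a Ψ (fun t => (deriv Ψ t)⁻¹ * deriv f t) (1 - γ) x

/-- Ψ-Hilfer fractional derivative of order `α` and type `β`. -/
noncomputable def psiHD (a : ℝ) (Ψ f : ℝ → ℝ) (α β : ℝ) (x : ℝ) : ℝ :=
  psiI a Ψ
    (fun y => (deriv Ψ y)⁻¹ * deriv (fun z => psiI a Ψ f ((1 - β) * (1 - α)) z) y)
    (β * (1 - α)) x

/-- Classical Riemann–Liouville fractional integral with base point `a`. -/
noncomputable def rlI (a : ℝ) (α : ℝ) (f : ℝ → ℝ) (x : ℝ) : ℝ :=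
  if α = 0 then f x
  else (Real.Gamma α)⁻¹ * ∫ t in a..x, (x - t) ^ (α - 1) * f t

/-- Classical Riemann–Liouville fractional derivative (fractional integral for `γ ≤ 0`). -/
noncomputable def rlD (a : ℝ) (γ : ℝ) (f : ℝ → ℝ) (x : ℝ) : ℝ :=
  if γ ≤ 0 then rlI a (-γ) f x
  else deriv (fun y => rlI a (1 - γ) f y) x

/-- Classical Caputo fractional derivative (fractional integral for `γ ≤ 0`). -/
noncomputable def capD (a : ℝ) (γ : ℝ) (f : ℝ → ℝ) (x : ℝ) : ℝ :=
  if γ ≤ 0 then rlI a (-γ) f x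
  else rlI a (1 - γ) (deriv f) x

/-- Classical Hilfer fractional derivative of order `α` and type `β`. -/
noncomputable def hilD (a : ℝ) (α β : ℝ) (f : ℝ → ℝ) (x : ℝ) : ℝ :=
  rlI a (β * (1 - α))
    (fun y => deriv (fun z => rlI a ((1 - β) * (1 - α)) f z) y) x

/-- Hadamard fractional integral with base point `a`. -/
noncomputable def hadI (a : ℝ) (α : ℝ) (f : ℝ → ℝ) (x : ℝ) : ℝ :=
  if α = 0 then f x
  else (Real.Gamma α)⁻¹ * ∫ t in a..x, (Real.log x - Real.log t) ^ (α - 1) * f t / t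

/-- Caputo–Hadamard fractional derivative (Hadamard fractional integral for `γ ≤ 0`). -/
noncomputable def chD (a : ℝ) (γ : ℝ) (f : ℝ → ℝ) (x : ℝ) : ℝ :=
  if γ ≤ 0 then hadI a (-γ) f x
  else hadI a (1 - γ) (fun t => t * deriv f t) x

/-- `h` is real-analytic with a power series converging on all of `ℝ`. -/
def EntireReal (h : ℝ → ℝ) : Prop :=
  ∃ p : FormalMultilinearSeries ℝ ℝ ℝ, HasFPowerSeriesOnBall h p 0 ⊤

open MeasureTheory Set

lemma aux_beta0 (p q L : ℝ) (hp : 0 < p) (hq : 0 < q) (hL : 0 < L) :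
    ∫ u in (0:ℝ)..L, (L - u) ^ (p - 1) * u ^ (q - 1) =
      Real.Gamma p * Real.Gamma q / Real.Gamma (p + q) * L ^ (p + q - 1) := by
  have h := Complex.betaIntegral_scaled (q : ℂ) (p : ℂ) hL
  rw [Complex.betaIntegral_eq_Gamma_mul_div _ _ (by simpa) (by simpa)] at h
  have h2 : ∫ u in (0:ℝ)..L, (u : ℂ) ^ ((q : ℂ) - 1) * ((L : ℂ) - u) ^ ((p : ℂ) - 1) =
      ∫ u in (0:ℝ)..L, (((L - u) ^ (p - 1) * u ^ (q - 1) : ℝ) : ℂ) := by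
    apply intervalIntegral.integral_congr
    intro u hu
    rw [uIcc_of_le hL.le] at hu
    have h1 : 0 ≤ L - u := by linarith [hu.2]
    simp only
    rw [Complex.ofReal_mul, Complex.ofReal_cpow h1, Complex.ofReal_cpow hu.1]
    push_cast
    ring
  rw [h2, intervalIntegral.integral_ofReal, ← Complex.ofReal_add, Complex.Gamma_ofReal,
    Complex.Gamma_ofReal, Complex.Gamma_ofReal, ← Complex.ofReal_one, ← Complex.ofReal_sub,
    ← Complex.ofReal_cpow hL.le] at h
  have h3 : ∫ u in (0:ℝ)..L, (L - u) ^ (p - 1) * u ^ (q - 1) =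
    L ^ (q + p - 1) * (Real.Gamma q * Real.Gamma p / Real.Gamma (q + p)) := by
    exact_mod_cast h
  rw [h3, add_comm q p]
  ring

lemma aux_beta (p q t x : ℝ) (hp : 0 < p) (hq : 0 < q) (hL : t < x) :
    ∫ s in t..x, (x - s) ^ (p - 1) * (s - t) ^ (q - 1) =
      Real.Gamma p * Real.Gamma q / Real.Gamma (p + q) * (x - t) ^ (p + q - 1) := by
  rw [← aux_beta0 p q (x - t) hp hq (by linarith)]
  have := intervalIntegral.integral_comp_sub_right (a := t) (b := x)
    (fun u => (x - t - u) ^ (p - 1) * u ^ (q - 1)) t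
  rw [sub_self] at this
  rw [← this]
  congr 1
  ext s
  ring_nf

lemma aux_beta_int (p q t x : ℝ) (hp : 0 < p) (hq : 0 < q) (hL : t < x) :
    IntervalIntegrable (fun s => (x - s) ^ (p - 1) * (s - t) ^ (q - 1)) volume t x := by
  apply intervalIntegral.intervalIntegrable_of_integral_ne_zero
  rw [aux_beta p q t x hp hq hL]
  have := Real.Gamma_pos_of_pos hp
  have := Real.Gamma_pos_of_pos hq
  have := Real.Gamma_pos_of_pos (add_pos hp hq)
  have : 0 < x - t := by linarith
  positivity

lemma aux_rpow_int (p a x : ℝ) (hp : 0 < p) :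
    IntervalIntegrable (fun t => (x - t) ^ (p - 1)) volume a x := by
  have := (intervalIntegral.intervalIntegrable_rpow' (a := x - a) (b := x - x)
    (show -1 < p - 1 by linarith)).comp_sub_left x
  simpa using this

lemma aux_int (p a x : ℝ) (hp : 0 < p) (d : ℝ → ℝ) (hax : a ≤ x) (hd : ContinuousOn d (Icc a x)) :
    IntervalIntegrable (fun t => (x - t) ^ (p - 1) * d t) volume a x := by
  apply (aux_rpow_int p a x hp).mul_continuousOn
  rwa [uIcc_of_le hax]

lemma aux_fubini (p q a x : ℝ) (hp : 0 < p) (hq : 0 < q) (hax : a ≤ x) (d : ℝ → ℝ)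
    (hd : Continuous d) :
    ∫ s in a..x, (x - s) ^ (p - 1) * ∫ t in a..s, (s - t) ^ (q - 1) * d t =
      Real.Gamma p * Real.Gamma q / Real.Gamma (p + q) *
        ∫ t in a..x, (x - t) ^ (p + q - 1) * d t := by
  set μ := (volume : Measure ℝ).restrict (Ioc a x) with hμ
  let K : ℝ → ℝ → ℝ := fun s t => (Ioi t).indicator
    (fun s => (x - s) ^ (p - 1) * (s - t) ^ (q - 1) * d t) s
  have hK' : ∀ s t, K s t = (Iio s).indicator
    (fun t => (x - s) ^ (p - 1) * (s - t) ^ (q - 1) * d t) t := by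
    intro s t
    simp [K, indicator]
  -- inner over t
  have e1 : ∀ s ∈ Ioc a x, ∫ t, K s t ∂μ = (x - s) ^ (p - 1) * ∫ t in a..s, (s - t) ^ (q - 1) * d t := by
    intro s hs
    simp_rw [hK']
    rw [integral_indicator measurableSet_Iio, hμ, Measure.restrict_restrict measurableSet_Iio,
      intervalIntegral.integral_of_le hs.1.le, ← integral_const_mul, integral_Ioc_eq_integral_Ioo]
    have : Iio s ∩ Ioc a x = Ioo a s := by
      ext t; simp only [mem_inter_iff, mem_Iio, mem_Ioc, mem_Ioo]
      constructor
      · rintro ⟨h1, h2, h3⟩; exact ⟨h2, h1⟩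
      · rintro ⟨h1, h2⟩; exact ⟨h2, h1, h2.le.trans hs.2⟩
    rw [this]
    congr 1; ext t; ring
  have hset : ∀ t ∈ Ioc a x, Ioi t ∩ Ioc a x = Ioc t x := by
    intro t ht
    ext s; simp only [mem_inter_iff, mem_Ioi, mem_Ioc]
    constructor
    · rintro ⟨h1, h2, h3⟩; exact ⟨h1, h3⟩
    · rintro ⟨h1, h2⟩; exact ⟨h1, ht.1.trans h1, h2⟩
  have e2 : ∀ (c : ℝ) , ∀ t ∈ Ioo a x, ∫ s, (Ioi t).indicator
    (fun s => (x - s) ^ (p - 1) * (s - t) ^ (q - 1) * c) s ∂μ =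
      Real.Gamma p * Real.Gamma q / Real.Gamma (p + q) * ((x - t) ^ (p + q - 1) * c) := by
    intro c t ht
    rw [integral_indicator measurableSet_Ioi, hμ, Measure.restrict_restrict measurableSet_Ioi,
      hset t ⟨ht.1, ht.2.le⟩, integral_mul_const, ← intervalIntegral.integral_of_le ht.2.le,
      aux_beta p q t x hp hq ht.2]
    ring
  have hae : ∀ᵐ t ∂μ, t ∈ Ioo a x := by
    rw [hμ, ← restrict_Ioo_eq_restrict_Ioc]
    exact ae_restrict_mem measurableSet_Ioo
  have hmeas : AEStronglyMeasurable (Function.uncurry K) (μ.prod μ) := by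
    apply Measurable.aestronglyMeasurable
    have : Function.uncurry K = {z : ℝ × ℝ | z.2 < z.1}.indicator
      (fun z => (x - z.1) ^ (p - 1) * (z.1 - z.2) ^ (q - 1) * d z.2) := by
      ext ⟨s, t⟩
      simp [K, indicator, Function.uncurry]
    rw [this]
    apply Measurable.indicator _ (measurableSet_lt measurable_snd measurable_fst)
    have := hd.measurable
    fun_prop
  have hint : Integrable (Function.uncurry K) (μ.prod μ) := by
    rw [integrable_prod_iff' hmeas]
    constructor
    · filter_upwards [hae] with t ht
      simp only [Function.uncurry]
      rw [integrable_indicator_iff measurableSet_Ioi, IntegrableOn, hμ,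
        Measure.restrict_restrict measurableSet_Ioi, hset t ⟨ht.1, ht.2.le⟩]
      have := (aux_beta_int p q t x hp hq ht.2).mul_const (d t)
      rwa [intervalIntegrable_iff_integrableOn_Ioc_of_le ht.2.le] at this
    · have h1 : Integrable (fun t => Real.Gamma p * Real.Gamma q / Real.Gamma (p + q) *
          ((x - t) ^ (p + q - 1) * |d t|)) μ := by
        apply Integrable.const_mul
        have := aux_int (p + q) a x (by linarith) (fun t => |d t|) hax hd.abs.continuousOn
        rwa [intervalIntegrable_iff_integrableOn_Ioc_of_le hax] at this
      refine h1.congr ?_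
      filter_upwards [hae] with t ht
      rw [← e2 _ t ht]
      apply integral_congr_ae
      filter_upwards [hae] with s hs
      simp only [Function.uncurry, K, indicator, mem_Ioi]
      split_ifs with h
      · have h1 : 0 < x - s := by linarith [hs.2]
        have h2 : 0 < s - t := by linarith
        have h3 : 0 ≤ (x - s) ^ (p - 1) * (s - t) ^ (q - 1) := by positivity
        rw [Real.norm_eq_abs, abs_mul, abs_of_nonneg h3]
      · simp
  rw [intervalIntegral.integral_of_le hax, intervalIntegral.integral_of_le hax]
  rw [← setIntegral_congr_fun measurableSet_Ioc e1]
  rw [integral_integral_swap hint, ← integral_const_mul]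
  apply integral_congr_ae
  filter_upwards [hae] with t ht
  exact e2 _ t ht

lemma aux_semigroup (p q a x : ℝ) (hp : 0 < p) (hq : 0 < q) (hax : a ≤ x) (d : ℝ → ℝ)
    (hd : Continuous d) :
    rlI a p (fun s => rlI a q d s) x = rlI a (p + q) d x := by
  have h0 : p + q ≠ 0 := by positivity
  simp only [rlI, hp.ne', hq.ne', h0, if_false]
  have := Real.Gamma_pos_of_pos hp
  have := Real.Gamma_pos_of_pos hq
  have h1 : ∀ s, (x - s) ^ (p - 1) * ((Real.Gamma q)⁻¹ * ∫ t in a..s, (s - t) ^ (q - 1) * d t) =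
    (Real.Gamma q)⁻¹ * ((x - s) ^ (p - 1) * ∫ t in a..s, (s - t) ^ (q - 1) * d t) := by
    intro s; ring
  simp_rw [h1]
  rw [intervalIntegral.integral_const_mul, aux_fubini p q a x hp hq hax d hd]
  field_simp

lemma aux_rlI_congr (p a x : ℝ) (hp : 0 < p) (hax : a ≤ x) (u v : ℝ → ℝ)
    (h : ∀ t ∈ Ioo a x, u t = v t) : rlI a p u x = rlI a p v x := by
  simp only [rlI, hp.ne', if_false]
  congr 1
  rw [intervalIntegral.integral_of_le hax, intervalIntegral.integral_of_le hax,
    integral_Ioc_eq_integral_Ioo, integral_Ioc_eq_integral_Ioo]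
  apply setIntegral_congr_fun measurableSet_Ioo
  intro t ht
  simp only [h t ht]

lemma aux_rlI_one (a x : ℝ) (u : ℝ → ℝ) : rlI a 1 u x = ∫ t in a..x, u t := by
  simp [rlI]

lemma aux_rlI_scaled (p a y : ℝ) (hp : 0 < p) (hay : a ≤ y) (d : ℝ → ℝ) :
    rlI a p d y = (Real.Gamma p)⁻¹ * ((y - a) ^ p *
      ∫ u in (0:ℝ)..1, (1 - u) ^ (p - 1) * d ((y - a) * u + a)) := by
  simp only [rlI, hp.ne', if_false]
  congr 1
  rcases hay.eq_or_lt with rfl | hay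
  · simp [Real.zero_rpow hp.ne']
  have hL : 0 < y - a := by linarith
  have h := intervalIntegral.integral_comp_mul_add (a := 0) (b := 1)
    (fun t => (y - t) ^ (p - 1) * d t) hL.ne' a
  have h2 : ∫ u in (0:ℝ)..1, (fun t => (y - t) ^ (p - 1) * d t) ((y - a) * u + a) =
      ∫ u in (0:ℝ)..1, (y - a) ^ (p - 1) * ((1 - u) ^ (p - 1) * d ((y - a) * u + a)) := by
    apply intervalIntegral.integral_congr
    intro u hu
    rw [uIcc_of_le zero_le_one] at hu
    simp only
    rw [show y - ((y - a) * u + a) = (y - a) * (1 - u) by ring,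
      Real.mul_rpow hL.le (by linarith [hu.2])]
    ring
  rw [h2, intervalIntegral.integral_const_mul] at h
  simp only [mul_zero, zero_add, mul_one, sub_add_cancel, smul_eq_mul] at h
  have h3 : (y - a) ^ p = (y - a) * (y - a) ^ (p - 1) := by
    rw [Real.rpow_sub_one hL.ne']; field_simp
  rw [h3, mul_assoc, h]
  field_simp

lemma aux_rlI_cont (p a : ℝ) (hp : 0 < p) (d : ℝ → ℝ) (hd : Continuous d) :
    ContinuousOn (fun y => rlI a p d y) (Ici a) := by
  have h1 : Continuous (fun y => (Real.Gamma p)⁻¹ * ((y - a) ^ p *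
      ∫ u in (0:ℝ)..1, (1 - u) ^ (p - 1) * d ((y - a) * u + a))) := by
    apply continuous_const.mul
    apply Continuous.mul
    · exact (continuous_id.sub continuous_const).rpow_const (fun _ => Or.inr hp.le)
    · rw [continuous_iff_continuousAt]
      intro y0
      obtain ⟨M, hM⟩ := ((isCompact_Icc (a := (0:ℝ)) (b := 1)).prod
        (isCompact_closedBall y0 1)).exists_bound_of_continuousOn
        (f := fun z : ℝ × ℝ => d ((z.2 - a) * z.1 + a)) (by fun_prop)
      apply intervalIntegral.continuousAt_of_dominated_interval
        (bound := fun u => (1 - u) ^ (p - 1) * M)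
      · filter_upwards with y
        apply Measurable.aestronglyMeasurable
        have := hd.measurable
        fun_prop
      · filter_upwards [Metric.closedBall_mem_nhds y0 one_pos] with y hy
        filter_upwards with u hu
        rw [uIoc_of_le zero_le_one] at hu
        have h0 : 0 ≤ 1 - u := by linarith [hu.2]
        rw [norm_mul, Real.norm_of_nonneg (by positivity)]
        exact mul_le_mul_of_nonneg_left (hM (u, y) ⟨⟨hu.1.le, hu.2⟩, hy⟩) (by positivity)
      · exact (aux_rpow_int p 0 1 hp).mul_const M
      · filter_upwards with u hu
        fun_prop
  apply h1.continuousOn.congr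
  intro y hy
  exact aux_rlI_scaled p a y hp hy d

lemma aux_rlI_const (p a y c : ℝ) (hp : 0 < p) :
    rlI a p (fun _ => c) y = c * (y - a) ^ p / Real.Gamma (p + 1) := by
  simp only [rlI, hp.ne', if_false]
  have := Real.Gamma_pos_of_pos hp
  rw [intervalIntegral.integral_mul_const,
    intervalIntegral.integral_comp_sub_left (fun t => t ^ (p - 1)) y,
    integral_rpow (Or.inl (by linarith)), Real.Gamma_add_one hp.ne']
  simp [Real.zero_rpow hp.ne']
  field_simp

/-- explicit formula for the Hilfer derivative of a C¹ function -/
lemma aux_hilD (a x α β : ℝ) (hα0 : 0 < α) (hα1 : α < 1) (hβ0 : 0 < β) (hβ1 : β ≤ 1)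
    (hax : a < x) (F d : ℝ → ℝ) (hd : Continuous d)
    (hF : ∀ y, a ≤ y → F y = F a + ∫ t in a..y, d t) :
    hilD a α β F x = rlI a (1 - α) d x +
      if (1 - β) * (1 - α) = 0 then 0 else F a * (x - a) ^ (-α) / Real.Gamma (1 - α) := by
  have hη : 0 < β * (1 - α) := mul_pos hβ0 (by linarith)
  unfold hilD
  set η := β * (1 - α) with hηd
  set ξ := (1 - β) * (1 - α) with hξd
  have hsum : η + ξ = 1 - α := by rw [hηd, hξd]; ring
  have hξ0 : 0 ≤ ξ := mul_nonneg (by linarith) (by linarith)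
  split_ifs with h0
  · rw [h0, add_zero] at hsum
    rw [← hsum, add_zero]
    apply aux_rlI_congr _ _ _ hη hax.le
    intro t ht
    have : (fun z => rlI a ξ F z) =ᶠ[nhds t] fun z => F a + ∫ t in a..z, d t := by
      filter_upwards [Ioi_mem_nhds ht.1] with z hz
      rw [← hF z (le_of_lt hz)]
      simp [rlI, h0]
    rw [this.deriv_eq]
    exact ((hd.integral_hasStrictDerivAt a t).hasDerivAt.const_add (F a)).deriv
  · have hξ : 0 < ξ := lt_of_le_of_ne hξ0 (Ne.symm h0)
    have hΓξ := Real.Gamma_pos_of_pos hξ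
    have hΓη := Real.Gamma_pos_of_pos hη
    have hcont := aux_rlI_cont ξ a hξ d hd
    have key : ∀ z, a ≤ z → rlI a ξ F z = F a * (z - a) ^ ξ / Real.Gamma (ξ + 1) +
        ∫ t in a..z, rlI a ξ d t := by
      intro z hz
      have e1 : rlI a ξ F z = rlI a ξ (fun y => F a + rlI a 1 d y) z := by
        apply aux_rlI_congr _ _ _ hξ hz
        intro t ht
        rw [hF t ht.1.le, aux_rlI_one]
      have e2 : rlI a ξ (fun y => F a + rlI a 1 d y) z =
          rlI a ξ (fun _ => F a) z + rlI a ξ (fun y => rlI a 1 d y) z := by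
        simp only [rlI, hξ.ne', if_false]
        rw [← mul_add, ← intervalIntegral.integral_add]
        · simp only [mul_add]
        · exact aux_int ξ a z hξ _ hz continuousOn_const
        · exact aux_int ξ a z hξ (fun y => rlI a 1 d y) hz
            ((aux_rlI_cont 1 a one_pos d hd).mono Icc_subset_Ici_self)
      rw [e1, e2, aux_rlI_const ξ a z _ hξ, aux_semigroup ξ 1 a z hξ one_pos hz d hd,
        add_comm ξ 1, ← aux_semigroup 1 ξ a z one_pos hξ hz d hd, aux_rlI_one]
    have hder : ∀ t ∈ Ioo a x, deriv (fun z => rlI a ξ F z) t =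
        F a / Real.Gamma ξ * (t - a) ^ (ξ - 1) + rlI a ξ d t := by
      intro t ht
      have : (fun z => rlI a ξ F z) =ᶠ[nhds t]
          fun z => F a * (z - a) ^ ξ / Real.Gamma (ξ + 1) + ∫ t in a..z, rlI a ξ d t := by
        filter_upwards [Ioi_mem_nhds ht.1] with z hz
        exact key z (le_of_lt hz)
      rw [this.deriv_eq]
      apply HasDerivAt.deriv
      apply HasDerivAt.add
      · have h1 := (((hasDerivAt_id t).sub_const a).rpow_const (p := ξ)
          (Or.inl (by simp; linarith [ht.1]))).const_mul (F a) |>.div_const (Real.Gamma (ξ + 1))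
        refine h1.congr_deriv ?_
        rw [Real.Gamma_add_one hξ.ne']
        simp
        field_simp
      · apply intervalIntegral.integral_hasDerivAt_right
        · apply ContinuousOn.intervalIntegrable
          rw [uIcc_of_le ht.1.le]
          exact hcont.mono Icc_subset_Ici_self
        · exact ContinuousOn.stronglyMeasurableAtFilter isOpen_Ioi
            (hcont.mono Ioi_subset_Ici_self) t ht.1
        · exact hcont.continuousAt (Ici_mem_nhds ht.1)
    rw [aux_rlI_congr η a x hη hax.le _ _ hder, ← hsum, ← aux_semigroup η ξ a x hη hξ hax.le d hd]
    simp only [rlI.eq_1 a η, hη.ne', if_false]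
    have e3 : ∀ t, (x - t) ^ (η - 1) * (F a / Real.Gamma ξ * (t - a) ^ (ξ - 1) + rlI a ξ d t) =
        F a / Real.Gamma ξ * ((x - t) ^ (η - 1) * (t - a) ^ (ξ - 1)) +
        (x - t) ^ (η - 1) * rlI a ξ d t := by intro t; ring
    simp_rw [e3]
    rw [intervalIntegral.integral_add ((aux_beta_int η ξ a x hη hξ hax).const_mul _)
      (aux_int η a x hη (fun t => rlI a ξ d t) hax.le (hcont.mono Icc_subset_Ici_self)),
      intervalIntegral.integral_const_mul, aux_beta η ξ a x hη hξ hax,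
      show η + ξ - 1 = -α by linarith]
    have := Real.Gamma_pos_of_pos (add_pos hη hξ)
    field_simp
    ring

noncomputable def auxJ (a : ℝ) (g : ℝ → ℝ) : ℕ → ℝ → ℝ
  | 0 => g
  | n + 1 => fun y => ∫ t in a..y, auxJ a g n t

lemma auxJ_cont (a : ℝ) (g : ℝ → ℝ) (hg : Continuous g) (n : ℕ) : Continuous (auxJ a g n) := by
  induction n with
  | zero => exact hg
  | succ n ih =>
    exact continuous_iff_continuousAt.2 fun t =>
      (ih.integral_hasStrictDerivAt a t).hasDerivAt.continuousAt

lemma auxJ_eq (a : ℝ) (g : ℝ → ℝ) (hg : Continuous g) (n : ℕ) :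
    ∀ y, a ≤ y → auxJ a g n y = rlI a (n : ℝ) g y := by
  induction n with
  | zero => intro y _; simp [auxJ, rlI]
  | succ n ih =>
    intro y hy
    have h1 : auxJ a g (n + 1) y = rlI a 1 (fun s => rlI a (n : ℝ) g s) y := by
      rw [aux_rlI_one]
      simp only [auxJ]
      apply intervalIntegral.integral_congr
      intro t ht
      rw [uIcc_of_le hy] at ht
      exact ih t ht.1
    rw [h1]
    rcases Nat.eq_zero_or_pos n with rfl | hn
    · simp [rlI]
    · rw [aux_semigroup 1 n a y one_pos (by exact_mod_cast hn) hy g hg]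
      push_cast
      rw [add_comm]

lemma aux_rlI_self (a p : ℝ) (hp : p ≠ 0) (g : ℝ → ℝ) : rlI a p g a = 0 := by
  simp [rlI, hp]

lemma aux_hilD_succ (a x α β : ℝ) (hα0 : 0 < α) (hα1 : α < 1) (hβ0 : 0 < β) (hβ1 : β ≤ 1)
    (hax : a < x) (g : ℝ → ℝ) (hg : Continuous g) (m : ℕ) :
    hilD a α β (fun y => rlI a ((m + 1 : ℕ) : ℝ) g y) x = rlI a (m + 1 - α) g x := by
  have hne : ((m + 1 : ℕ) : ℝ) ≠ 0 := by positivity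
  rw [aux_hilD a x α β hα0 hα1 hβ0 hβ1 hax _ (auxJ a g m) (auxJ_cont a g hg m)]
  · simp only [aux_rlI_self a _ hne g, zero_mul, zero_div, ite_self, add_zero]
    rw [aux_rlI_congr (1 - α) a x (by linarith) hax.le _ (fun s => rlI a (m : ℝ) g s)
      (fun t ht => auxJ_eq a g hg m t ht.1.le)]
    rcases Nat.eq_zero_or_pos m with rfl | hn
    · simp [rlI]
    · rw [aux_semigroup (1 - α) m a x (by linarith) (by exact_mod_cast hn) hax.le g hg]
      congr 1
      ring
  · intro y hy
    rw [aux_rlI_self a _ hne g, zero_add, ← auxJ_eq a g hg (m + 1) y hy]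
    rfl

lemma aux_prod (α : ℝ) (hα1 : α < 1) (m : ℕ) :
    (∏ i ∈ Finset.range (m + 1), (α - (i : ℝ))) * Real.Gamma (1 - α) =
      α * (-1) ^ m * Real.Gamma (m + 1 - α) := by
  induction m with
  | zero => simp
  | succ m ih =>
    rw [Finset.prod_range_succ, mul_right_comm, ih]
    have h : (m : ℝ) + 1 - α ≠ 0 := by
      have : (0:ℝ) ≤ m := Nat.cast_nonneg m
      intro h; linarith
    push_cast
    rw [show (m : ℝ) + 1 + 1 - α = (m + 1 - α) + 1 by ring, Real.Gamma_add_one h]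
    ring

lemma aux_dslope_cont (f : ℝ → ℝ) (x : ℝ) (hf : Differentiable ℝ f) : Continuous (dslope f x) := by
  rw [← continuousOn_univ, continuousOn_dslope Filter.univ_mem]
  exact ⟨hf.continuous.continuousOn, hf x⟩

lemma aux_parts (a x α : ℝ) (hα1 : α < 1) (hax : a < x) (f g : ℝ → ℝ)
    (hf : ContDiff ℝ 1 f) (hg : ContDiff ℝ 1 g) :
    rlI a (1 - α) (deriv (fun t => f t * g t)) x = f x * rlI a (1 - α) (deriv g) x +
      (f x - f a) * g a * (x - a) ^ (-α) / Real.Gamma (1 - α) +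
      α / Real.Gamma (1 - α) * ∫ t in a..x, (x - t) ^ (-α) * (dslope f x t * g t) := by
  have hfd : Differentiable ℝ f := hf.differentiable one_ne_zero
  have hgd : Differentiable ℝ g := hg.differentiable one_ne_zero
  have hψ := aux_dslope_cont f x hfd
  have hgc := hgd.continuous
  have hg'c : Continuous (deriv g) := hg.continuous_deriv le_rfl
  have hfgc : Continuous (deriv (fun t => f t * g t)) := (hf.mul hg).continuous_deriv le_rfl
  have h1α : 0 < 1 - α := by linarith
  have hψe : ∀ t, (t - x) * dslope f x t = f t - f x := fun t => by
    simpa using sub_smul_dslope f x t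
  have i1 := aux_int (1 - α) a x h1α (fun t => dslope f x t * g t) hax.le
    (hψ.mul hgc).continuousOn
  have i2 := aux_int (1 - α) a x h1α _ hax.le hfgc.continuousOn
  have i3 := aux_int (1 - α) a x h1α _ hax.le hg'c.continuousOn
  simp only [rlI, h1α.ne', if_false]
  rw [show 1 - α - 1 = -α by ring] at *
  have hpow : ∀ t, t < x → (x - t) ^ (1 - α) = (x - t) * (x - t) ^ (-α) := by
    intro t ht
    rw [sub_eq_add_neg 1 α, Real.rpow_add (by linarith), Real.rpow_one]
  have key := intervalIntegral.integral_eq_sub_of_hasDerivAt_of_le (a := a) (b := x)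
    (f := fun t => (x - t) ^ (1 - α) * (dslope f x t * g t))
    (f' := fun t => α * ((x - t) ^ (-α) * (dslope f x t * g t)) -
      (x - t) ^ (-α) * deriv (fun t => f t * g t) t + f x * ((x - t) ^ (-α) * deriv g t)) hax.le
    ?_ ?_ (((i1.const_mul α).sub i2).add (i3.const_mul (f x)))
  · rw [intervalIntegral.integral_add ((i1.const_mul α).sub i2) (i3.const_mul (f x)),
      intervalIntegral.integral_sub (i1.const_mul α) i2, intervalIntegral.integral_const_mul,
      intervalIntegral.integral_const_mul] at key
    simp only [sub_self, Real.zero_rpow h1α.ne', zero_mul] at key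
    have h2 : (x - a) ^ (1 - α) * (dslope f x a * g a) = (f x - f a) * g a * (x - a) ^ (-α) := by
      rw [hpow a hax]
      linear_combination (-(x - a) ^ (-α) * g a) * hψe a
    rw [h2] at key
    linear_combination (-(Real.Gamma (1 - α))⁻¹) * key
  · apply Continuous.continuousOn
    apply Continuous.mul _ (hψ.mul hgc)
    exact (continuous_const.sub continuous_id).rpow_const (fun _ => Or.inr h1α.le)
  · intro t ht
    have hxt : x - t ≠ 0 := by linarith [ht.2]
    have hev : (fun t => (x - t) ^ (1 - α) * (dslope f x t * g t)) =ᶠ[nhds t]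
        fun t => -((x - t) ^ (-α) * (f t * g t - f x * g t)) := by
      filter_upwards [Iio_mem_nhds ht.2] with s hs
      rw [hpow s hs]
      linear_combination (-(x - s) ^ (-α) * g s) * hψe s
    refine HasDerivAt.congr_of_eventuallyEq ?_ hev
    have d1 : HasDerivAt (fun t => (x - t) ^ (-α)) (-1 * (-α) * (x - t) ^ (-α - 1)) t :=
      ((hasDerivAt_id t).const_sub x).rpow_const (Or.inl hxt)
    have d2 : HasDerivAt (fun t => f t * g t) (deriv (fun t => f t * g t) t) t :=
      ((hfd t).mul (hgd t)).hasDerivAt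
    have d3 := (hgd t).hasDerivAt.const_mul (f x)
    refine (d1.mul (d2.sub d3)).neg.congr_deriv ?_
    rw [Real.rpow_sub_one hxt]
    have := hψe t
    simp only [Pi.sub_apply]
    field_simp
    linear_combination (α * (x - t) ^ (-α) * g t) * this

lemma aux_taylor (f : ℝ → ℝ) (hf : EntireReal f) (x y : ℝ) :
    HasSum (fun n : ℕ => iteratedDeriv n f x / (n.factorial : ℝ) * y ^ n) (f (x + y)) := by
  obtain ⟨p, hp⟩ := hf
  have h2 := hp.changeOrigin (y := x) (by simp)
  rw [zero_add] at h2
  have h3 := h2.hasSum_iteratedFDeriv (y := y) (by simp)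
  refine Eq.mp (congrArg (fun F => HasSum F (f (x + y))) (funext fun n => ?_)) h3
  rw [iteratedDeriv_eq_iteratedFDeriv]
  have := (iteratedFDeriv ℝ n f x).map_smul_univ (fun _ ↦ y) (fun _ ↦ 1)
  simp only [smul_eq_mul, mul_one, Finset.prod_const, Finset.card_fin] at this
  simp only [smul_eq_mul]
  erw [this]
  ring

lemma aux_contDiff (f : ℝ → ℝ) (hf : EntireReal f) : ContDiff ℝ 1 f := by
  obtain ⟨p, hp⟩ := hf
  have h : AnalyticOnNhd ℝ f univ := fun y _ => hp.analyticOnNhd y (by simp)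
  exact contDiffOn_univ.1 h.contDiffOn_of_completeSpace

lemma aux_sum (a x α : ℝ) (hα1 : α < 1) (hax : a < x) (f g : ℝ → ℝ)
    (hf : EntireReal f) (hg : Continuous g) :
    HasSum (fun m : ℕ => genBinom α (m + 1) * iteratedDeriv (m + 1) f x * rlI a (m + 1 - α) g x)
      (α / Real.Gamma (1 - α) * ∫ t in a..x, (x - t) ^ (-α) * (dslope f x t * g t)) := by
  have h1α : 0 < 1 - α := by linarith
  have hΓ := Real.Gamma_pos_of_pos h1α
  set c : ℕ → ℝ := fun n => iteratedDeriv n f x / (n.factorial : ℝ) with hc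
  obtain ⟨M, hM⟩ := (isCompact_Icc (a := a) (b := x)).exists_bound_of_continuousOn hg.continuousOn
  have hL : 0 < x - a := by linarith
  have hsumm : Summable (fun m : ℕ => |c (m + 1)| * (x - a) ^ m) := by
    have h1 := (summable_nat_add_iff 1).2 (aux_taylor f hf x (x - a)).summable.abs
    have h2 := h1.mul_right (x - a)⁻¹
    refine h2.congr fun m => ?_
    rw [abs_mul, abs_of_nonneg (pow_nonneg hL.le _), pow_succ]
    field_simp
    rfl
  have main : HasSum (fun m : ℕ => ∫ t in a..x, (x - t) ^ (-α) * (c (m + 1) * (t - x) ^ m * g t))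
      (∫ t in a..x, (x - t) ^ (-α) * (dslope f x t * g t)) := by
    apply intervalIntegral.hasSum_integral_of_dominated_convergence
      (fun m t => |c (m + 1)| * (x - a) ^ m * ((x - t) ^ (-α) * M))
    · intro m
      apply Measurable.aestronglyMeasurable
      have := hg.measurable
      fun_prop
    · intro m
      filter_upwards with t ht
      rw [uIoc_of_le hax.le] at ht
      have h0 : 0 ≤ x - t := by linarith [ht.2]
      have h1 : |t - x| ≤ x - a := by rw [abs_le]; constructor <;> linarith [ht.1, ht.2]
      have h2 := hM t ⟨ht.1.le, ht.2⟩
      rw [norm_mul, Real.norm_of_nonneg (Real.rpow_nonneg h0 _), norm_mul, norm_mul, norm_pow,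
        Real.norm_eq_abs (c _), Real.norm_eq_abs (t - x)]
      calc (x - t) ^ (-α) * (|c (m + 1)| * |t - x| ^ m * ‖g t‖)
          ≤ (x - t) ^ (-α) * (|c (m + 1)| * (x - a) ^ m * M) := by gcongr
        _ = _ := by ring
    · filter_upwards with t ht
      exact hsumm.mul_right _
    · simp_rw [tsum_mul_right]
      apply IntervalIntegrable.const_mul
      apply IntervalIntegrable.mul_const
      have := aux_rpow_int (1 - α) a x h1α
      rwa [show 1 - α - 1 = -α by ring] at this
    · have hne : ∀ᵐ t : ℝ, t ≠ x := by simp [ae_iff]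
      filter_upwards [hne] with t htx ht
      apply HasSum.mul_left
      apply HasSum.mul_right
      have htx' : t - x ≠ 0 := sub_ne_zero.2 htx
      have h1 := aux_taylor f hf x (t - x)
      rw [← hasSum_nat_add_iff' 1] at h1
      have h2 := h1.mul_right (t - x)⁻¹
      have h3 : dslope f x t = (f (x + (t - x)) - ∑ i ∈ Finset.range 1,
          iteratedDeriv i f x / (i.factorial : ℝ) * (t - x) ^ i) * (t - x)⁻¹ := by
        have := sub_smul_dslope f x t
        simp only [smul_eq_mul] at this
        simp [← this]
        field_simp
      rw [h3]
      convert h2 using 2 with m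
      simp only [hc]
      rw [pow_succ]
      field_simp
  have h2 := main.mul_left (α / Real.Gamma (1 - α))
  refine Eq.mp (congrArg (fun F => HasSum F _) (funext fun m => ?_)) h2
  have hm0 : (0:ℝ) ≤ m := Nat.cast_nonneg m
  have hp : 0 < (m : ℝ) + 1 - α := by linarith
  have hΓm := Real.Gamma_pos_of_pos hp
  have e : ∫ t in a..x, (x - t) ^ (-α) * (c (m + 1) * (t - x) ^ m * g t) =
      (-1) ^ m * c (m + 1) * ∫ t in a..x, (x - t) ^ ((m : ℝ) + 1 - α - 1) * g t := by
    rw [← intervalIntegral.integral_const_mul, intervalIntegral.integral_of_le hax.le,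
      intervalIntegral.integral_of_le hax.le,
      integral_Ioc_eq_integral_Ioo, integral_Ioc_eq_integral_Ioo]
    apply setIntegral_congr_fun measurableSet_Ioo
    intro t ht
    have h0 : 0 < x - t := by linarith [ht.2]
    simp only
    rw [show (m : ℝ) + 1 - α - 1 = m + -α by ring, Real.rpow_add h0, Real.rpow_natCast,
      show t - x = -1 * (x - t) by ring, mul_pow]
    ring
  rw [e]
  simp only [rlI, hp.ne', if_false, genBinom, hc]
  have h3 := aux_prod α hα1 m
  have h4 : (∏ i ∈ Finset.range (m + 1), (α - (i : ℝ))) =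
      α * (-1) ^ m * Real.Gamma (m + 1 - α) / Real.Gamma (1 - α) := by
    rw [← h3]; field_simp
  rw [h4]
  field_simp


lemma aux_ftc (a : ℝ) (F : ℝ → ℝ) (hF : ContDiff ℝ 1 F) (y : ℝ) :
    F y = F a + ∫ t in a..y, deriv F t := by
  rw [intervalIntegral.integral_deriv_eq_sub (fun t _ => hF.differentiable one_ne_zero t)
    ((hF.continuous_deriv le_rfl).intervalIntegrable _ _)]
  ring

/-- Leibniz type rule for the Hilfer fractional derivative; the Hilfer
derivative of order `α - m` is the Hilfer derivative of order `α` applied to the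
Riemann–Liouville fractional integral of order `m`. -/
theorem leibniz_Hilfer
    (a b : ℝ) (hab : a < b) (α β : ℝ)
    (hα0 : 0 < α) (hα1 : α < 1) (hβ0 : 0 < β) (hβ1 : β ≤ 1)
    (f g : ℝ → ℝ) (hf : EntireReal f) (hg : EntireReal g)
    (x : ℝ) (hx : x ∈ Set.Ioo a b) :
    Summable (fun m : ℕ => genBinom α m * iteratedDeriv m f x *
        hilD a α β (fun y => rlI a (m : ℝ) g y) x) ∧
    Summable (fun k : ℕ =>
        genBinom (-((1 - β) * (1 - α))) k * rlI a ((1 - β) * (1 - α) + k) g a *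
          (iteratedDeriv k f x - iteratedDeriv k f a) *
          (x - a) ^ (-(α + (1 - β) * (1 - α))) / Real.Gamma (β * (1 - α))) ∧
    hilD a α β (fun t => f t * g t) x =
      (∑' m : ℕ, genBinom α m * iteratedDeriv m f x *
        hilD a α β (fun y => rlI a (m : ℝ) g y) x) +
      ∑' k : ℕ,
        genBinom (-((1 - β) * (1 - α))) k * rlI a ((1 - β) * (1 - α) + k) g a *
          (iteratedDeriv k f x - iteratedDeriv k f a) *
          (x - a) ^ (-(α + (1 - β) * (1 - α))) / Real.Gamma (β * (1 - α)) := by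
  have hax : a < x := hx.1
  have hfc := aux_contDiff f hf
  have hgc := aux_contDiff g hg
  have hgcont := hgc.continuous
  set T : ℕ → ℝ := fun m => genBinom α m * iteratedDeriv m f x *
        hilD a α β (fun y => rlI a (m : ℝ) g y) x with hT
  set S : ℕ → ℝ := fun k =>
        genBinom (-((1 - β) * (1 - α))) k * rlI a ((1 - β) * (1 - α) + k) g a *
          (iteratedDeriv k f x - iteratedDeriv k f a) *
          (x - a) ^ (-(α + (1 - β) * (1 - α))) / Real.Gamma (β * (1 - α)) with hS
  have hξ0 : 0 ≤ (1 - β) * (1 - α) := mul_nonneg (by linarith) (by linarith)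
  have hSz : ∀ k, k ≠ 0 → S k = 0 := by
    intro k hk
    have : (1 - β) * (1 - α) + (k : ℝ) ≠ 0 := by
      have : (0:ℝ) < k := by exact_mod_cast Nat.pos_of_ne_zero hk
      positivity
    simp [hS, aux_rlI_self a _ this g]
  have hSS : HasSum S (S 0) := hasSum_single 0 hSz
  have hsum := aux_sum a x α hα1 hax f g hf hgcont
  have hsum' : HasSum (fun m => T (m + 1))
      (α / Real.Gamma (1 - α) * ∫ t in a..x, (x - t) ^ (-α) * (dslope f x t * g t)) := by
    refine Eq.mp (congrArg (fun F => HasSum F _) (funext fun m => ?_)) hsum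
    rw [hT]; simp only; rw [aux_hilD_succ a x α β hα0 hα1 hβ0 hβ1 hax g hgcont m]
  have hTT := (hasSum_nat_add_iff 1).1 hsum'
  refine ⟨hTT.summable, hSS.summable, ?_⟩
  rw [hTT.tsum_eq, hSS.tsum_eq]
  have hT0 : T 0 = f x * hilD a α β g x := by
    simp [hT, genBinom, rlI]
  rw [Finset.sum_range_one, hT0,
    aux_hilD a x α β hα0 hα1 hβ0 hβ1 hax g (deriv g) (hgc.continuous_deriv le_rfl)
      (fun y _ => aux_ftc a g hgc y),
    aux_hilD a x α β hα0 hα1 hβ0 hβ1 hax (fun t => f t * g t) (deriv fun t => f t * g t)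
      ((hfc.mul hgc).continuous_deriv le_rfl) (fun y _ => aux_ftc a _ (hfc.mul hgc) y),
    aux_parts a x α hα1 hax f g hfc hgc]
  split_ifs with h0
  · have hη : β * (1 - α) = 1 - α := by linear_combination -h0
    have : S 0 = (f x - f a) * g a * (x - a) ^ (-α) / Real.Gamma (1 - α) := by
      simp only [hS, h0, hη]
      simp [genBinom, rlI]
      ring
    rw [this]
    ring
  · have : S 0 = 0 := by
      simp [hS, aux_rlI_self a _ h0 g]
    rw [this]
    ring
end

section
/- (Leibniz type rule for the Katugampola derivative.) Let 0 < α < 1, ρ > 0, 0 < a < b, and take Ψ(x) := x^ρ. Suppose f = h ∘ Ψ and g = w ∘ Ψ with h, w : ℝ → ℝ real-analytic with everywhere-convergent power series, and write f⁽ᵐ⁾(x) := h⁽ᵐ⁾(x^ρ). Then for every x ∈ (a,b): (^{RL}D^{α;Ψ}(f·g))(x) = Σ_{m=0}^∞ binom(α, m) f⁽ᵐ⁾(x) (^{RL}D^{α−m;Ψ} g)(x), the series converging. (Here ^{RL}D^{α;Ψ} with Ψ(x) = x^ρ equals ρ^{−α} times the Katugampola fractional derivative of order α.) -/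
open Real

open MeasureTheory Filter Topology Set in
lemma lk_int_kernel {α : ℝ} (hα1 : α < 1) :
    IntervalIntegrable (fun v : ℝ => (1 - v) ^ (-α)) volume 0 1 := by
  have h := (intervalIntegral.intervalIntegrable_rpow' (a := 1) (b := 0) (r := -α)
    (by linarith)).comp_sub_left 1
  simpa using h

lemma lk_int_mul {α : ℝ} (hα1 : α < 1) {u : ℝ → ℝ} (hu : Continuous u) :
    IntervalIntegrable (fun v : ℝ => (1 - v) ^ (-α) * u v) MeasureTheory.volume 0 1 :=
  (lk_int_kernel hα1).mul_continuousOn hu.continuousOn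

/-- the transported integral -/
noncomputable def lkG (A : ℝ) (φ : ℝ → ℝ) (β Y : ℝ) : ℝ :=
  ∫ v in (0:ℝ)..1, (1 - v) ^ (β - 1) * φ (A + (Y - A) * v)

open MeasureTheory Filter Topology Set in
lemma lk_subst {a ρ y : ℝ} (ha : 0 < a) (hρ : 0 < ρ) (hy : a < y) (φ : ℝ → ℝ) (β : ℝ) :
    ∫ t in a..y, deriv (fun t : ℝ => t ^ ρ) t * (y ^ ρ - t ^ ρ) ^ (β - 1) * φ (t ^ ρ)
      = (y ^ ρ - a ^ ρ) ^ β * lkG (a ^ ρ) φ β (y ^ ρ) := by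
  have hL : a ^ ρ < y ^ ρ := Real.rpow_lt_rpow ha.le hy hρ
  have hL' : 0 < y ^ ρ - a ^ ρ := by linarith
  have himg : (fun t : ℝ => t ^ ρ) '' (Ioc a y) = Ioc (a ^ ρ) (y ^ ρ) := by
    ext s
    constructor
    · rintro ⟨t, ht, rfl⟩
      exact ⟨Real.rpow_lt_rpow ha.le ht.1 hρ,
        Real.rpow_le_rpow (ha.trans ht.1).le ht.2 hρ.le⟩
    · intro hs
      have hap : 0 < a ^ ρ := Real.rpow_pos_of_pos ha _
      have hs0 : 0 < s := hap.trans hs.1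
      refine ⟨s ^ ρ⁻¹, ⟨?_, ?_⟩, ?_⟩
      · exact (Real.lt_rpow_inv_iff_of_pos ha.le hs0.le hρ).2 hs.1
      · exact (Real.rpow_inv_le_iff_of_pos hs0.le (ha.trans hy).le hρ).2 hs.2
      · exact Real.rpow_inv_rpow hs0.le hρ.ne'
  have h1 := integral_image_eq_integral_abs_deriv_smul (s := Ioc a y) measurableSet_Ioc
    (f := fun t : ℝ => t ^ ρ) (f' := fun t => ρ * t ^ (ρ - 1))
    (fun t ht => (Real.hasDerivAt_rpow_const (Or.inl (ha.trans ht.1).ne')).hasDerivWithinAt)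
    ((Real.rpow_left_injOn hρ.ne').mono (fun t ht => (ha.trans ht.1).le))
    (fun s => (y ^ ρ - s) ^ (β - 1) * φ s)
  rw [himg] at h1
  rw [intervalIntegral.integral_of_le hy.le]
  have h2 : ∫ t in Ioc a y, deriv (fun t : ℝ => t ^ ρ) t * (y ^ ρ - t ^ ρ) ^ (β - 1) * φ (t ^ ρ)
      = ∫ s in Ioc (a ^ ρ) (y ^ ρ), (y ^ ρ - s) ^ (β - 1) * φ s := by
    rw [h1]
    refine setIntegral_congr_fun measurableSet_Ioc (fun t ht => ?_)
    have ht0 : 0 < t := ha.trans ht.1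
    have hd := (Real.hasDerivAt_rpow_const (x := t) (p := ρ) (Or.inl ht0.ne')).deriv
    simp only [smul_eq_mul]
    rw [hd, abs_of_pos (mul_pos hρ (Real.rpow_pos_of_pos ht0 _))]
    ring
  rw [h2, ← intervalIntegral.integral_of_le hL.le]
  have h3 := intervalIntegral.smul_integral_comp_add_mul (a := 0) (b := 1)
    (fun s => (y ^ ρ - s) ^ (β - 1) * φ s) (y ^ ρ - a ^ ρ) (a ^ ρ)
  simp only [mul_zero, add_zero, mul_one, add_sub_cancel] at h3
  rw [← h3, lkG, smul_eq_mul, ← intervalIntegral.integral_const_mul,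
    ← intervalIntegral.integral_const_mul]
  refine intervalIntegral.integral_congr (fun v hv => ?_)
  rw [uIcc_of_le zero_le_one] at hv
  have e : y ^ ρ - (a ^ ρ + (y ^ ρ - a ^ ρ) * v) = (y ^ ρ - a ^ ρ) * (1 - v) := by ring
  rw [e, Real.mul_rpow hL'.le (by linarith [hv.2])]
  have e2 : (y ^ ρ - a ^ ρ) ^ β = (y ^ ρ - a ^ ρ) * (y ^ ρ - a ^ ρ) ^ (β - 1) := by
    rw [Real.rpow_sub_one hL'.ne']; field_simp
  rw [e2]; ring

open MeasureTheory Filter Topology Set in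
lemma lk_deriv {α A X : ℝ} (hα1 : α < 1) (hAX : A < X) {φ : ℝ → ℝ}
    (hφ : ContDiff ℝ 1 φ) :
    HasDerivAt (fun Y => (Y - A) ^ (1 - α) * lkG A φ (1 - α) Y)
      ((1 - α) * (X - A) ^ (-α) * lkG A φ (1 - α) X + (X - A) ^ (1 - α) *
        ∫ v in (0:ℝ)..1, (1 - v) ^ (-α) * (v * deriv φ (A + (X - A) * v))) X := by
  have hc : Continuous φ := hφ.continuous
  have hc' : Continuous (deriv φ) := hφ.continuous_deriv le_rfl
  have hL : 0 < X - A := by linarith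
  obtain ⟨C, hC⟩ := (isCompact_Icc (a := A) (b := X + 1)).exists_bound_of_continuousOn
    hc'.continuousOn
  have hG : HasDerivAt (fun Y => lkG A φ (1 - α) Y)
      (∫ v in (0:ℝ)..1, (1 - v) ^ (-α) * (v * deriv φ (A + (X - A) * v))) X := by
    have e : ∀ Y, lkG A φ (1 - α) Y = ∫ v in (0:ℝ)..1, (1 - v) ^ (-α) * φ (A + (Y - A) * v) := by
      intro Y; simp only [lkG]; congr 1; ext v; congr 2; ring
    simp only [e]
    refine (intervalIntegral.hasDerivAt_integral_of_dominated_loc_of_deriv_le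
      (F := fun Y v => (1 - v) ^ (-α) * φ (A + (Y - A) * v))
      (F' := fun Y v => (1 - v) ^ (-α) * (v * deriv φ (A + (Y - A) * v)))
      (bound := fun v => (1 - v) ^ (-α) * C)
      (Ioo_mem_nhds hAX (lt_add_one X)) ?_ ?_ ?_ ?_ ?_ ?_).2
    · refine Eventually.of_forall fun Y => ?_
      have := (lk_int_mul hα1 (u := fun v => φ (A + (Y - A) * v)) (by fun_prop))
      exact (intervalIntegrable_iff.1 this).aestronglyMeasurable
    · exact lk_int_mul hα1 (u := fun v => φ (A + (X - A) * v)) (by fun_prop)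
    · have := (lk_int_mul hα1 (u := fun v => v * deriv φ (A + (X - A) * v)) (by fun_prop))
      exact (intervalIntegrable_iff.1 this).aestronglyMeasurable
    · refine Eventually.of_forall fun v hv Y hY => ?_
      rw [uIoc_of_le zero_le_one] at hv
      have h1 : 0 ≤ (1 - v) ^ (-α) := Real.rpow_nonneg (by linarith [hv.2]) _
      rw [norm_mul, Real.norm_of_nonneg h1]
      refine mul_le_mul_of_nonneg_left ?_ h1
      have hYA : 0 < Y - A := by linarith [hY.1]
      have h2 := hC (A + (Y - A) * v) ⟨by nlinarith [hv.1], by nlinarith [hv.2, hY.2]⟩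
      rw [norm_mul, Real.norm_of_nonneg hv.1.le]
      nlinarith [norm_nonneg (deriv φ (A + (Y - A) * v)), hv.2, hv.1]
    · exact (lk_int_kernel hα1).mul_const C
    · refine Eventually.of_forall fun v hv Y hY => ?_
      have hd := (hφ.differentiable one_ne_zero (A + (Y - A) * v)).hasDerivAt
      have hi : HasDerivAt (fun Y => A + (Y - A) * v) v Y := by
        simpa using (((hasDerivAt_id Y).sub_const A).mul_const v).const_add A
      have := (hd.comp Y hi).const_mul ((1 - v) ^ (-α))
      exact this.congr_deriv (by ring)
  have hp : HasDerivAt (fun Y => (Y - A) ^ (1 - α)) ((1 - α) * (X - A) ^ (-α)) X := by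
    have := ((hasDerivAt_id' X).sub_const A).rpow_const (p := 1 - α) (Or.inl hL.ne')
    exact this.congr_deriv (by rw [show 1 - α - 1 = -α by ring]; ring)
  exact hp.mul hG

open MeasureTheory Filter Topology Set in
lemma lk_marchaud {α A X : ℝ} (hα0 : 0 < α) (hα1 : α < 1) (hAX : A < X) {φ : ℝ → ℝ}
    (hφ : ContDiff ℝ 1 φ) (h0 : φ X = 0) :
    (1 - α) * (X - A) ^ (-α) * lkG A φ (1 - α) X + (X - A) ^ (1 - α) *
        ∫ v in (0:ℝ)..1, (1 - v) ^ (-α) * (v * deriv φ (A + (X - A) * v))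
      = -α * (X - A) ^ (-α) *
        ∫ v in (0:ℝ)..1, (1 - v) ^ (-α - 1) * φ (A + (X - A) * v) := by
  have hc : Continuous φ := hφ.continuous
  have hc' : Continuous (deriv φ) := hφ.continuous_deriv le_rfl
  set L := X - A with hLdef
  have hL : 0 < L := by linarith
  obtain ⟨C, hC⟩ := (isCompact_Icc (a := A) (b := X)).exists_bound_of_continuousOn
    hc'.continuousOn
  have hb : ∀ v ∈ Icc (0:ℝ) 1, |φ (A + L * v)| ≤ C * L * (1 - v) := by
    intro v hv
    have hm : A + L * v ∈ Icc A X := ⟨by nlinarith [hv.1], by nlinarith [hv.2]⟩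
    have := (convex_Icc A X).norm_image_sub_le_of_norm_deriv_le
      (fun x _ => hφ.differentiable one_ne_zero x) hC (right_mem_Icc.2 hAX.le) hm
    rw [h0, sub_zero, Real.norm_eq_abs, Real.norm_eq_abs] at this
    have e : |A + L * v - X| = L * (1 - v) := by
      rw [show A + L * v - X = -(L * (1 - v)) by rw [hLdef]; ring, abs_neg, abs_of_nonneg]
      nlinarith [hv.2]
    rw [e] at this; linarith
  have hker : ∀ v ∈ Ioo (0:ℝ) 1, (1 - v) ^ (-α) = (1 - v) * (1 - v) ^ (-α - 1) := by
    intro v hv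
    have : (1 - v) ≠ 0 := by linarith [hv.2]
    rw [Real.rpow_sub_one this]; field_simp
  have hq : IntervalIntegrable (fun v => (1 - v) ^ (-α - 1) * φ (A + L * v)) volume 0 1 := by
    refine ((lk_int_kernel hα1).const_mul (C * L)).mono_fun' ?_ ?_
    · have : Measurable (fun v => (1 - v) ^ (-α - 1) * φ (A + L * v)) :=
        ((measurable_const.sub measurable_id).pow_const _).mul (by fun_prop)
      exact this.aestronglyMeasurable
    · rw [uIoc_of_le zero_le_one]
      refine (ae_restrict_iff' measurableSet_Ioc).2 (Eventually.of_forall fun v hv => ?_)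
      rcases eq_or_lt_of_le hv.2 with h1 | h1
      · subst h1
        simp [hLdef, h0, Real.zero_rpow (neg_ne_zero.2 hα0.ne')]
      · have hpos : 0 ≤ (1 - v) ^ (-α - 1) := Real.rpow_nonneg (by linarith) _
        beta_reduce
        rw [norm_mul, Real.norm_of_nonneg hpos, hker v ⟨hv.1, h1⟩, Real.norm_eq_abs]
        have := mul_le_mul_of_nonneg_left (hb v ⟨hv.1.le, hv.2⟩) hpos
        linarith
  have i1 := lk_int_mul hα1 (u := fun v => φ (A + L * v)) (by fun_prop)
  have i2 := lk_int_mul hα1 (u := fun v => v * deriv φ (A + L * v)) (by fun_prop)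
  -- integration by parts
  have hF := intervalIntegral.integral_eq_sub_of_hasDerivAt_of_tendsto
    (f := fun v : ℝ => v * (1 - v) ^ (-α) * φ (A + L * v))
    (f' := fun v : ℝ => (1 - α) * ((1 - v) ^ (-α) * φ (A + L * v))
      + α * ((1 - v) ^ (-α - 1) * φ (A + L * v))
      + L * ((1 - v) ^ (-α) * (v * deriv φ (A + L * v)))) zero_lt_one (fa := 0) (fb := 0)
    (by
      intro v hv
      have hv1 : 1 - v ≠ 0 := by linarith [hv.2]
      have hd := (hφ.differentiable one_ne_zero (A + L * v)).hasDerivAt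
      have hi : HasDerivAt (fun v => A + L * v) L v := by
        simpa using ((hasDerivAt_id v).const_mul L).const_add A
      have hk := ((hasDerivAt_id' v).const_sub 1).rpow_const (p := -α) (Or.inl hv1)
      have := ((hasDerivAt_id' v).mul hk).mul (hd.comp v hi)
      refine this.congr_deriv ?_
      simp only [Function.comp_apply, Pi.mul_apply]
      rw [hker v hv]; ring)
    (((i1.const_mul _).add (hq.const_mul _)).add (i2.const_mul _))
    (by
      have : ContinuousAt (fun v : ℝ => v * (1 - v) ^ (-α) * φ (A + L * v)) 0 := by
        refine (continuousAt_id.mul ?_).mul (by fun_prop)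
        exact (continuousAt_const.sub continuousAt_id).rpow_const (Or.inl (by simp))
      have h := this.tendsto.mono_left (nhdsWithin_le_nhds (s := Ioi 0))
      simpa using h)
    (by
      have hz : Tendsto (fun v : ℝ => C * L * (1 - v) ^ (1 - α)) (𝓝[<] 1) (𝓝 0) := by
        have : ContinuousAt (fun v : ℝ => C * L * (1 - v) ^ (1 - α)) 1 := by
          refine continuousAt_const.mul ?_
          exact (continuousAt_const.sub continuousAt_id).rpow_const (Or.inr (by linarith))
        have h := this.tendsto.mono_left (nhdsWithin_le_nhds (s := Iio 1))
        simpa [Real.zero_rpow (sub_ne_zero.2 hα1.ne')] using h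
      refine squeeze_zero_norm' ?_ hz
      filter_upwards [Ioo_mem_nhdsLT (zero_lt_one (α := ℝ))] with v hv
      have hv1 : 0 < 1 - v := by linarith [hv.2]
      have hpos : 0 ≤ (1 - v) ^ (-α) := Real.rpow_nonneg hv1.le _
      rw [norm_mul, norm_mul, Real.norm_of_nonneg hpos, Real.norm_of_nonneg hv.1.le,
        show 1 - α = -α + 1 by ring, Real.rpow_add_one hv1.ne', Real.norm_eq_abs]
      calc v * (1 - v) ^ (-α) * |φ (A + L * v)|
          ≤ 1 * (1 - v) ^ (-α) * |φ (A + L * v)| := by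
            gcongr; exact hv.2.le
        _ ≤ 1 * (1 - v) ^ (-α) * (C * L * (1 - v)) := by
            gcongr; exact hb v ⟨hv.1.le, hv.2.le⟩
        _ = _ := by ring)
  rw [intervalIntegral.integral_add ((i1.const_mul _).add (hq.const_mul _)) (i2.const_mul _),
    intervalIntegral.integral_add (i1.const_mul _) (hq.const_mul _),
    intervalIntegral.integral_const_mul, intervalIntegral.integral_const_mul,
    intervalIntegral.integral_const_mul] at hF
  have e : lkG A φ (1 - α) X = ∫ v in (0:ℝ)..1, (1 - v) ^ (-α) * φ (A + L * v) := by
    simp only [lkG]; congr 1; ext v; congr 2; ring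
  rw [e, show 1 - α = -α + 1 by ring, Real.rpow_add_one hL.ne', show -α + 1 = 1 - α by ring]
  linear_combination L ^ (-α) * hF

lemma lk_taylor {h : ℝ → ℝ} (hh : EntireReal h) (X y : ℝ) :
    HasSum (fun m : ℕ => iteratedDeriv m h X / (m.factorial : ℝ) * y ^ m) (h (X + y)) := by
  obtain ⟨p, hp⟩ := hh
  have h1 := hp.changeOrigin (y := X) (by simp)
  have h2 := h1.hasSum_iteratedFDeriv (y := y) (by simp)
  rw [zero_add] at h2
  convert! h2 using 2 with m
  rw [iteratedFDeriv_apply_eq_iteratedDeriv_mul_prod]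
  simp
  ring

lemma lk_contDiff {h : ℝ → ℝ} (hh : EntireReal h) : ContDiff ℝ 1 h := by
  obtain ⟨p, hp⟩ := hh
  rw [contDiff_iff_contDiffAt]
  intro x
  exact (hp.analyticAt_of_mem (by simp)).contDiffAt

open MeasureTheory Filter Topology Set in
lemma lk_sum {α A X : ℝ} (hα0 : 0 < α) (hα1 : α < 1) (hAX : A < X) {h w : ℝ → ℝ}
    (hh : EntireReal h) (hw : Continuous w) :
    HasSum (fun m : ℕ => iteratedDeriv (m + 1) h X / ((m + 1).factorial : ℝ) *
        (-(X - A)) ^ (m + 1) * lkG A w ((m + 1 : ℕ) - α) X)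
      (∫ v in (0:ℝ)..1, (1 - v) ^ (-α - 1) *
        ((h (A + (X - A) * v) - h X) * w (A + (X - A) * v))) := by
  set L := X - A with hLdef
  have hL : 0 < L := by linarith
  set d : ℕ → ℝ := fun m => iteratedDeriv m h X / (m.factorial : ℝ) with hd
  obtain ⟨M, hM⟩ := (isCompact_Icc (a := (0:ℝ)) (b := 1)).exists_bound_of_continuousOn
    (f := fun v => w (A + L * v)) (by fun_prop)
  have hM0 : 0 ≤ M := (norm_nonneg _).trans (hM 0 (by simp))
  have hser : ∀ y, HasSum (fun m : ℕ => d (m + 1) * y ^ (m + 1)) (h (X + y) - h X) := by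
    intro y
    have := (hasSum_nat_add_iff' 1).2 (lk_taylor hh X y)
    simpa using this
  have habs : Summable (fun m : ℕ => |d (m + 1)| * L ^ (m + 1)) := by
    have := (hser L).summable.abs
    refine this.congr fun m => ?_
    rw [abs_mul, abs_of_pos (pow_pos hL _)]
  have hkey : ∀ m : ℕ, ∀ v ∈ Icc (0:ℝ) 1, (1 - v) ^ (((m + 1 : ℕ) : ℝ) - α - 1)
      = (1 - v) ^ (-α - 1) * (1 - v) ^ (m + 1) := by
    intro m v hv
    rcases eq_or_lt_of_le hv.2 with h1 | h1
    · subst h1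
      rw [sub_self, zero_pow (Nat.succ_ne_zero m), mul_zero, Real.zero_rpow]
      push_cast
      intro hc
      have hc' : (m : ℝ) = α := by linarith
      rcases Nat.eq_zero_or_pos m with hm | hm
      · subst hm; simp at hc'; linarith
      · have : (1 : ℝ) ≤ m := by exact_mod_cast hm
        linarith
    · have hv1 : 0 < 1 - v := by linarith
      rw [← Real.rpow_natCast, ← Real.rpow_add hv1]; congr 1; ring
  have hle : ∀ m : ℕ, ∀ v ∈ Icc (0:ℝ) 1, (1 - v) ^ (-α - 1) * (1 - v) ^ (m + 1)
      ≤ (1 - v) ^ (-α) := by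
    intro m v hv
    rcases eq_or_lt_of_le hv.2 with h1 | h1
    · subst h1
      simp [Real.zero_rpow (neg_ne_zero.2 hα0.ne')]
    · have hv1 : 0 < 1 - v := by linarith
      rw [Real.rpow_sub_one hv1.ne', pow_succ]
      have hp : (1 - v) ^ m ≤ 1 := pow_le_one₀ hv1.le (by linarith [hv.1])
      have h2 : 0 ≤ (1 - v) ^ (-α) := Real.rpow_nonneg hv1.le _
      have : (1 - v) ^ (-α) / (1 - v) * ((1 - v) ^ m * (1 - v)) = (1 - v) ^ (-α) * (1 - v) ^ m := by
        field_simp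
      rw [this]
      nlinarith
  have main := intervalIntegral.hasSum_integral_of_dominated_convergence
    (a := 0) (b := 1) (μ := volume)
    (F := fun (m : ℕ) v => (1 - v) ^ (-α - 1) *
      ((d (m + 1) * (-L * (1 - v)) ^ (m + 1)) * w (A + L * v)))
    (f := fun v => (1 - v) ^ (-α - 1) * ((h (A + L * v) - h X) * w (A + L * v)))
    (fun m v => (|d (m + 1)| * L ^ (m + 1)) * (M * (1 - v) ^ (-α)))
    (by
      intro m
      have : Measurable (fun v => (1 - v) ^ (-α - 1) *
          ((d (m + 1) * (-L * (1 - v)) ^ (m + 1)) * w (A + L * v))) :=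
        ((measurable_const.sub measurable_id).pow_const _).mul
          (Continuous.measurable (by fun_prop))
      exact this.aestronglyMeasurable)
    (by
      intro m
      refine Eventually.of_forall fun v hv => ?_
      rw [uIoc_of_le zero_le_one] at hv
      have hv' : v ∈ Icc (0:ℝ) 1 := ⟨hv.1.le, hv.2⟩
      have hv1 : 0 ≤ 1 - v := by linarith [hv.2]
      have hpos : 0 ≤ (1 - v) ^ (-α - 1) := Real.rpow_nonneg hv1 _
      have hpow : 0 ≤ (1 - v) ^ (m + 1) := pow_nonneg hv1 _
      have hLp : 0 ≤ L ^ (m + 1) := pow_nonneg hL.le _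
      rw [norm_mul, norm_mul, norm_mul, norm_pow, norm_mul, norm_neg, Real.norm_of_nonneg hpos,
        Real.norm_of_nonneg hL.le, Real.norm_of_nonneg hv1, Real.norm_eq_abs, mul_pow]
      calc (1 - v) ^ (-α - 1) * (|d (m + 1)| * (L ^ (m + 1) * (1 - v) ^ (m + 1)) * ‖w (A + L * v)‖)
          = (|d (m + 1)| * L ^ (m + 1)) * (‖w (A + L * v)‖ *
              ((1 - v) ^ (-α - 1) * (1 - v) ^ (m + 1))) := by ring
        _ ≤ _ := by
          have h1 := hM v hv'
          have h2 := hle m v hv'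
          gcongr)
    (Eventually.of_forall fun v hv => habs.mul_right _)
    (by
      simp only [tsum_mul_right]
      exact ((lk_int_kernel hα1).const_mul M).const_mul _)
    (by
      refine Eventually.of_forall fun v hv => ?_
      have := hser (-L * (1 - v))
      rw [show X + -L * (1 - v) = A + L * v by rw [hLdef]; ring] at this
      exact (this.mul_right _).mul_left _)
  convert! main using 2 with m
  rw [lkG, ← intervalIntegral.integral_const_mul]
  refine intervalIntegral.integral_congr (fun v hv => ?_)
  rw [uIcc_of_le zero_le_one] at hv
  beta_reduce
  rw [hkey m v hv, mul_pow]; ring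

lemma lk_binom {α : ℝ} (hα1 : α < 1) (m : ℕ) :
    (∏ i ∈ Finset.range (m + 1), (α - (i : ℝ))) * Real.Gamma (1 - α)
      = -α * (-1) ^ (m + 1) * Real.Gamma ((m + 1 : ℕ) - α) := by
  induction m with
  | zero => simp
  | succ m ih =>
    have hne : ((m + 1 : ℕ) : ℝ) - α ≠ 0 := by
      push_cast
      have : (0:ℝ) ≤ m := Nat.cast_nonneg m
      intro hc; linarith
    rw [Finset.prod_range_succ, show ((m + 1 + 1 : ℕ) : ℝ) - α = ((m + 1 : ℕ) - α) + 1 by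
      push_cast; ring, Real.Gamma_add_one hne]
    linear_combination (α - ((m + 1 : ℕ) : ℝ)) * ih

open MeasureTheory Filter Topology Set in
lemma lk_psiRLD {a ρ α x D : ℝ} (ha : 0 < a) (hρ : 0 < ρ) (hα0 : 0 < α) (hα1 : α < 1)
    (hx : a < x) (φ : ℝ → ℝ)
    (hD : HasDerivAt (fun Y => (Y - a ^ ρ) ^ (1 - α) * lkG (a ^ ρ) φ (1 - α) Y) D (x ^ ρ)) :
    psiRLD a (fun t => t ^ ρ) (fun t => φ (t ^ ρ)) α x = (Real.Gamma (1 - α))⁻¹ * D := by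
  have hx0 : 0 < x := ha.trans hx
  have hΨ := Real.hasDerivAt_rpow_const (x := x) (p := ρ) (Or.inl hx0.ne')
  have hne : ρ * x ^ (ρ - 1) ≠ 0 := (mul_pos hρ (Real.rpow_pos_of_pos hx0 _)).ne'
  rw [psiRLD, if_neg (not_le.2 hα0), hΨ.deriv]
  have heq : (fun y => psiI a (fun t => t ^ ρ) (fun t => φ (t ^ ρ)) (1 - α) y) =ᶠ[𝓝 x]
      fun y => (Real.Gamma (1 - α))⁻¹ *
        ((y ^ ρ - a ^ ρ) ^ (1 - α) * lkG (a ^ ρ) φ (1 - α) (y ^ ρ)) := by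
    filter_upwards [Ioi_mem_nhds hx] with y hy
    rw [psiI, if_neg (by linarith), lk_subst ha hρ hy]
  have hcomp := (HasDerivAt.comp x hD hΨ).const_mul (Real.Gamma (1 - α))⁻¹
  rw [heq.deriv_eq]
  have hd : deriv (fun y => (Real.Gamma (1 - α))⁻¹ *
        ((y ^ ρ - a ^ ρ) ^ (1 - α) * lkG (a ^ ρ) φ (1 - α) (y ^ ρ))) x
      = (Real.Gamma (1 - α))⁻¹ * (D * (ρ * x ^ (ρ - 1))) := hcomp.deriv
  rw [hd]; field_simp
/-- Leibniz type rule for the Katugampola fractional derivative,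
i.e. the Ψ-Riemann–Liouville derivative with `Ψ(x) = x^ρ`. -/
theorem leibniz_Katugampola
    (a b ρ : ℝ) (ha : 0 < a) (hab : a < b) (hρ : 0 < ρ)
    (α : ℝ) (hα0 : 0 < α) (hα1 : α < 1)
    (f g h w : ℝ → ℝ)
    (hf : f = fun t => h (t ^ ρ)) (hg : g = fun t => w (t ^ ρ))
    (hh : EntireReal h) (hw : EntireReal w)
    (x : ℝ) (hx : x ∈ Set.Ioo a b) :
    HasSum
      (fun m : ℕ => genBinom α m * iteratedDeriv m h (x ^ ρ) *
        psiRLD a (fun t => t ^ ρ) g (α - m) x)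
      (psiRLD a (fun t => t ^ ρ) (fun t => f t * g t) α x) := by
  subst hf hg
  obtain ⟨hax, -⟩ := hx
  have hAX : a ^ ρ < x ^ ρ := Real.rpow_lt_rpow ha.le hax hρ
  have hx0 : 0 < x := ha.trans hax
  set A := a ^ ρ with hA
  set X := x ^ ρ with hX
  have hL : 0 < X - A := by linarith
  have ch := lk_contDiff hh
  have cw := lk_contDiff hw
  have hΓ : Real.Gamma (1 - α) ≠ 0 := (Real.Gamma_pos_of_pos (by linarith)).ne'
  have hφ : ContDiff ℝ 1 (fun s => (h s - h X) * w s) := (ch.sub contDiff_const).mul cw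
  have D1 := lk_deriv hα1 hAX cw
  have D2 := lk_deriv hα1 hAX hφ
  rw [lk_marchaud hα0 hα1 hAX hφ (by simp)] at D2
  have D3 := (D1.const_mul (h X)).add D2
  set E1 := (1 - α) * (X - A) ^ (-α) * lkG A w (1 - α) X + (X - A) ^ (1 - α) *
        ∫ v in (0:ℝ)..1, (1 - v) ^ (-α) * (v * deriv w (A + (X - A) * v)) with hE1
  have hfun : (fun Y => (Y - A) ^ (1 - α) * lkG A (fun s => h s * w s) (1 - α) Y)
      = (fun Y => h X * ((Y - A) ^ (1 - α) * lkG A w (1 - α) Y)) +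
        fun Y => (Y - A) ^ (1 - α) * lkG A (fun s => (h s - h X) * w s) (1 - α) Y := by
    have hcw := cw.continuous
    have hch := ch.continuous
    funext Y
    have e : 1 - α - 1 = -α := by ring
    have hs : lkG A (fun s => h s * w s) (1 - α) Y
        = h X * lkG A w (1 - α) Y + lkG A (fun s => (h s - h X) * w s) (1 - α) Y := by
      simp only [lkG, e]
      rw [← intervalIntegral.integral_const_mul, ← intervalIntegral.integral_add]
      · congr 1; ext v; ring
      · exact (lk_int_mul hα1 (u := fun v => w (A + (Y - A) * v)) (by fun_prop)).const_mul _
      · exact lk_int_mul hα1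
          (u := fun v => (h (A + (Y - A) * v) - h X) * w (A + (Y - A) * v)) (by fun_prop)
    simp only [Pi.add_apply]
    rw [hs]; ring
  rw [← hfun] at D3
  have v1 := lk_psiRLD ha hρ hα0 hα1 hax w D1
  have v3 := lk_psiRLD ha hρ hα0 hα1 hax (fun s => h s * w s) D3
  have S := (lk_sum hα0 hα1 hAX hh cw.continuous).mul_left
    ((Real.Gamma (1 - α))⁻¹ * (-α * (X - A) ^ (-α)))
  rw [← hasSum_nat_add_iff' 1, v3]
  convert! S using 1
  · funext m
    have hm : (0:ℝ) ≤ m := Nat.cast_nonneg m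
    have hpos : 0 < ((m + 1 : ℕ) : ℝ) - α := by push_cast; linarith
    have hΓm := (Real.Gamma_pos_of_pos hpos).ne'
    have hval : psiRLD a (fun t => t ^ ρ) (fun t => w (t ^ ρ)) (α - ((m + 1 : ℕ) : ℝ)) x
        = (Real.Gamma (((m + 1 : ℕ) : ℝ) - α))⁻¹ *
          ((X - A) ^ (((m + 1 : ℕ) : ℝ) - α) * lkG A w (((m + 1 : ℕ) : ℝ) - α) X) := by
      rw [psiRLD, if_pos (by linarith), neg_sub, psiI, if_neg hpos.ne', lk_subst ha hρ hax]
    have hpw : (X - A) ^ (((m + 1 : ℕ) : ℝ) - α) = (X - A) ^ (-α) * (X - A) ^ (m + 1) := by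
      rw [← Real.rpow_natCast, ← Real.rpow_add hL]; congr 1; ring
    have hb : genBinom α (m + 1) * (Real.Gamma (((m + 1 : ℕ) : ℝ) - α))⁻¹
        = (Real.Gamma (1 - α))⁻¹ * (-α * (-1) ^ (m + 1)) / ((m + 1).factorial : ℝ) := by
      have := lk_binom hα1 m
      have hf : ((m + 1).factorial : ℝ) ≠ 0 := by positivity
      rw [genBinom]
      field_simp
      linear_combination this
    rw [hval, hpw, neg_pow (X - A)]
    linear_combination (iteratedDeriv (m + 1) h X * (X - A) ^ (-α) * (X - A) ^ (m + 1) *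
      lkG A w (((m + 1 : ℕ) : ℝ) - α) X) * hb
  · simp only [Finset.range_one, Finset.sum_singleton, Nat.cast_zero, sub_zero, v1, genBinom,
      Finset.range_zero, Finset.prod_empty, Nat.factorial_zero, Nat.cast_one, iteratedDeriv_zero]
    ring
end
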